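/- (Triangular dependence on the counter term.) Let k ≥ 1, let β₁, …, β_{k+1} be populated multi-indices, let γ be a multi-index with [γ] ≥ 0, and set β := β₁ + ⋯ + β_{k+1}. If the k-fold composition matrix entry ((D^(0))^k)_{β_{k+1}}^γ ≠ 0, then β_i ≺ β for every i = 1, …, k, and γ ≺ β. -/

import Mathlib

open Finsupp

noncomputable section

/-- The index set `I`: symbols `z_k` for `k : ℕ` (left summand) and `z_n` for
`n ∈ ℕ² \ {(0,0)}` (right summand). -/
abbrev RSIdx : Type := ℕ ⊕ {n : ℕ × ℕ // n ≠ (0, 0)}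

/-- Multi-indices: finitely supported functions from the index set to `ℕ`. -/
abbrev MIdx : Type := RSIdx →₀ ℕ

/-- The unit multi-index `e_k`. -/
def eK (k : ℕ) : MIdx := Finsupp.single (Sum.inl k) 1

/-- The unit multi-index `e_n` for `n ≠ (0,0)`. -/
def eN (n : {n : ℕ × ℕ // n ≠ (0, 0)}) : MIdx := Finsupp.single (Sum.inr n) 1

/-- The scaled length `[β] = Σ_k k·β(k) − Σ_{n≠(0,0)} β(n)`. -/
def slen (β : MIdx) : ℤ :=
  β.sum fun i m =>
    match i with
    | Sum.inl k => (k : ℤ) * (m : ℤ)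
    | Sum.inr _ => -(m : ℤ)

/-- The parabolic length `|n| = n₁ + 2 n₂` of `n ∈ ℕ²`. -/
def plen (n : ℕ × ℕ) : ℕ := n.1 + 2 * n.2

/-- The polynomial part `|β|_p = Σ_{n≠(0,0)} |n|·β(n)`. -/
def polyPart (β : MIdx) : ℕ :=
  β.sum fun i m =>
    match i with
    | Sum.inl _ => 0
    | Sum.inr n => plen n.val * m

/-- The homogeneity `|β| = α(1+[β]) + |β|_p`. -/
def homog (α : ℝ) (β : MIdx) : ℝ := α * (1 + (slen β : ℝ)) + (polyPart β : ℝ)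

/-- `β` is purely polynomial iff `β = e_n` for some `n ≠ (0,0)`. -/
def PurelyPoly (β : MIdx) : Prop := ∃ n, β = eN n

/-- `β` is populated iff it is purely polynomial or `[β] ≥ 0`. -/
def Populated (β : MIdx) : Prop := PurelyPoly β ∨ 0 ≤ slen β

/-- The ordinal `|β|_≺ = [β] + (1/2)|β|_p + (1/4)β(0)`. -/
def precNorm (β : MIdx) : ℝ :=
  (slen β : ℝ) + (polyPart β : ℝ) / 2 + (β (Sum.inl 0) : ℝ) / 4

open Classical in
/-- The matrix entry `(D^(0))_β^γ` of the derivation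
`D^(0) = Σ_k (k+1) z_{k+1} ∂_{z_k}`: it is `(k+1)·γ(k)` if there exists `k` with
`γ + e_{k+1} = β + e_k` (such `k` is unique), and `0` otherwise. -/
def D0 (β γ : MIdx) : ℕ :=
  if h : ∃ k : ℕ, γ + eK (k + 1) = β + eK k then
    (h.choose + 1) * γ (Sum.inl h.choose)
  else 0

open Classical in
/-- The matrix entry of `D^(n)` for `n ∈ ℕ²`, where `D^((0,0))` means `D^(0)` and,
for `n ≠ (0,0)`, `(D^(n))_β^γ = β(n) + 1` if `γ = β + e_n`, and `0` otherwise. -/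
def DMat (n : ℕ × ℕ) : MIdx → MIdx → ℕ :=
  if hn : n = (0, 0) then D0
  else fun β γ =>
    if γ = β + eN ⟨n, hn⟩ then β (Sum.inr ⟨n, hn⟩) + 1 else 0

/-- Composition of two `ℕ`-valued matrices indexed by multi-indices; the sum over the
intermediate multi-index is well-defined (by row-finiteness) as a `finsum`. -/
def matMul (A B : MIdx → MIdx → ℕ) : MIdx → MIdx → ℕ :=
  fun β γ => ∑ᶠ δ : MIdx, A β δ * B δ γ

open Classical in
/-- The identity matrix. -/
def matId : MIdx → MIdx → ℕ := fun β γ => if γ = β then 1 else 0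

/-- Composition of a list of matrices. -/
def matProd : List (MIdx → MIdx → ℕ) → MIdx → MIdx → ℕ
  | [] => matId
  | A :: l => matMul A (matProd l)

/-- The `l`-fold matrix power of `D^(0)`. -/
def D0pow : ℕ → MIdx → MIdx → ℕ
  | 0 => matId
  | l + 1 => matMul D0 (D0pow l)

theorem aux_slen_add (a b : MIdx) : slen (a + b) = slen a + slen b := by
  unfold slen
  apply Finsupp.sum_add_index'
  · rintro (k | n) <;> simp
  · rintro (k | n) x y <;> push_cast <;> ring

theorem aux_poly_add (a b : MIdx) : polyPart (a + b) = polyPart a + polyPart b := by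
  unfold polyPart
  apply Finsupp.sum_add_index'
  · rintro (k | n) <;> simp
  · rintro (k | n) x y <;> ring

theorem aux_prec_add (a b : MIdx) : precNorm (a + b) = precNorm a + precNorm b := by
  unfold precNorm
  rw [aux_slen_add, aux_poly_add, Finsupp.add_apply]
  push_cast
  ring

theorem aux_prec_zero : precNorm 0 = 0 := by
  simp [precNorm, slen, polyPart]

theorem aux_prec_sum {ι : Type*} (s : Finset ι) (f : ι → MIdx) :
    precNorm (∑ j ∈ s, f j) = ∑ j ∈ s, precNorm (f j) := by
  classical
  induction s using Finset.induction_on with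
  | empty => simp [aux_prec_zero]
  | insert a s ha ih => rw [Finset.sum_insert ha, Finset.sum_insert ha, aux_prec_add, ih]

theorem aux_slen_eK (k : ℕ) : slen (eK k) = k := by
  unfold slen eK
  rw [Finsupp.sum_single_index] <;> simp

theorem aux_poly_eK (k : ℕ) : polyPart (eK k) = 0 := by
  unfold polyPart eK
  rw [Finsupp.sum_single_index] <;> simp

theorem aux_slen_le_prec (a : MIdx) : (slen a : ℝ) ≤ precNorm a := by
  unfold precNorm
  have h1 : (0 : ℝ) ≤ (polyPart a : ℝ) / 2 := by positivity
  have h2 : (0 : ℝ) ≤ (a (Sum.inl 0) : ℝ) / 4 := by positivity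
  linarith

theorem aux_pop (a : MIdx) (h : Populated a) : -(1 / 2 : ℝ) ≤ precNorm a := by
  rcases h with ⟨n, rfl⟩ | h
  · have h1 : slen (eN n) = -1 := by
      unfold slen eN
      rw [Finsupp.sum_single_index] <;> simp
    have h2 : polyPart (eN n) = plen n.val := by
      unfold polyPart eN
      rw [Finsupp.sum_single_index] <;> simp
    have h3 : 1 ≤ plen n.val := by
      obtain ⟨⟨x, y⟩, hn⟩ := n
      simp only [ne_eq, Prod.mk.injEq] at hn
      simp only [plen]
      omega
    have h4 : (1 : ℝ) ≤ (plen n.val : ℝ) := by exact_mod_cast h3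
    have h5 : (0 : ℝ) ≤ ((eN n) (Sum.inl 0) : ℝ) / 4 := by positivity
    unfold precNorm
    rw [h1, h2]
    push_cast
    linarith
  · have h1 : (0 : ℝ) ≤ (slen a : ℝ) := by exact_mod_cast h
    linarith [aux_slen_le_prec a]

theorem aux_D0 (b c : MIdx) (h : D0 b c ≠ 0) :
    slen b = slen c + 1 ∧ precNorm c + 3 / 4 ≤ precNorm b := by
  unfold D0 at h
  split_ifs at h with hk
  · obtain ⟨k, hk⟩ := hk
    have h1 := congrArg slen hk
    have h2 := congrArg polyPart hk
    have h3 := DFunLike.congr_fun hk (Sum.inl 0)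
    rw [aux_slen_add, aux_slen_add, aux_slen_eK, aux_slen_eK] at h1
    rw [aux_poly_add, aux_poly_add, aux_poly_eK, aux_poly_eK] at h2
    rw [Finsupp.add_apply, Finsupp.add_apply] at h3
    have h4 : (eK (k + 1)) (Sum.inl 0) = 0 := by
      simp [eK]
    have h5 : (eK k) (Sum.inl 0) ≤ 1 := by
      unfold eK
      rw [Finsupp.single_apply]
      split_ifs <;> simp
    have h6 : slen b = slen c + 1 := by push_cast at h1; linarith
    refine ⟨h6, ?_⟩
    have h7 : c (Sum.inl 0) ≤ b (Sum.inl 0) + 1 := by omega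
    have h8 : polyPart b = polyPart c := by omega
    have h9 : (c (Sum.inl 0) : ℝ) ≤ b (Sum.inl 0) + 1 := by exact_mod_cast h7
    unfold precNorm
    rw [h6, h8]
    push_cast
    linarith
  · exact absurd rfl h

theorem aux_pow (k : ℕ) (c : MIdx) : ∀ b : MIdx, D0pow k b c ≠ 0 →
    slen b = slen c + k ∧ precNorm c + 3 / 4 * k ≤ precNorm b := by
  induction k with
  | zero =>
    intro b h
    simp only [D0pow, matId, ne_eq, ite_eq_right_iff, one_ne_zero, imp_false, not_not] at h
    subst h
    simp
  | succ l ih =>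
    intro b h
    obtain ⟨d, hd⟩ : ∃ d, D0 b d * D0pow l d c ≠ 0 := by
      by_contra! hc
      apply h
      simp [D0pow, matMul, hc]
    obtain ⟨h1, h2⟩ := aux_D0 b d (left_ne_zero_of_mul hd)
    obtain ⟨h3, h4⟩ := ih d (right_ne_zero_of_mul hd)
    push_cast
    constructor <;> linarith

/-- Triangular dependence on the counter term: with `k ≥ 1`, populated
`β₁, …, β_{k+1}`, `γ` with `[γ] ≥ 0` and `β = β₁ + ⋯ + β_{k+1}`, if
`((D^(0))^k)_{β_{k+1}}^γ ≠ 0` then `βᵢ ≺ β` for `i = 1, …, k`, and `γ ≺ β`. -/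
theorem statement14 (k : ℕ) (hk : 1 ≤ k)
    (βs : Fin (k + 1) → MIdx) (hpop : ∀ i, Populated (βs i))
    (γ : MIdx) (hγ : 0 ≤ slen γ)
    (h : D0pow k (βs (Fin.last k)) γ ≠ 0) :
    (∀ i : Fin k, precNorm (βs i.castSucc) < precNorm (∑ j, βs j))
    ∧ precNorm γ < precNorm (∑ j, βs j) := by
  obtain ⟨h1, h2⟩ := aux_pow k γ _ h
  have hk' : (1 : ℝ) ≤ k := by exact_mod_cast hk
  have h3 : (k : ℝ) ≤ precNorm (βs (Fin.last k)) := by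
    have h4 : (k : ℤ) ≤ slen (βs (Fin.last k)) := by linarith
    have h5 : (k : ℝ) ≤ (slen (βs (Fin.last k)) : ℝ) := by exact_mod_cast h4
    linarith [aux_slen_le_prec (βs (Fin.last k))]
  have h0 : ∀ i : Fin k, 0 ≤ precNorm (βs i.castSucc) + 1 / 2 := fun i => by
    linarith [aux_pop _ (hpop i.castSucc)]
  have hs : ∑ i : Fin k, (precNorm (βs i.castSucc) + 1 / 2)
      = ∑ i : Fin k, precNorm (βs i.castSucc) + k / 2 := by
    rw [Finset.sum_add_distrib]
    simp
    ring
  rw [aux_prec_sum, Fin.sum_univ_castSucc]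
  constructor
  · intro i
    have h6 := Finset.single_le_sum (fun j _ => h0 j) (Finset.mem_univ i)
    rw [hs] at h6
    linarith
  · have h6 := Finset.sum_nonneg (fun j (_ : j ∈ Finset.univ) => h0 j)
    rw [hs] at h6
    linarith
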